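/- Let Z be a subset system and P a poset. For every 𝒞 ∈ Γ^Z(Γ^Z(P)) (where Γ^Z(P) is ordered by inclusion), the union ⋃𝒞 belongs to Γ^Z(P), and ⋃𝒞 is the supremum of 𝒞 in the complete lattice Γ^Z(P). -/

import Mathlib

/-!
The map `p ↦ ↓p` is monotone from `P` to `Γ^Z(P)`, so it sends a `Z`-set `S` of `P` to a `Z`-set of
`Γ^Z(P)`. If `S ⊆ ⋃𝒞`, every `↓s` with `s ∈ S` lies in `𝒞`, because members of `Γ^Z` are lower
sets (`isLowerSet_of_mem_GammaZ`, applied in `P` and in `Γ^Z(P)`). For `x ∈ S^δ`, every upper bound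
`B ∈ Γ^Z(P)` of `{↓s : s ∈ S}` contains `S`, hence `S^δ`, hence `↓x`; so `↓x` lies in the cut of
`{↓s : s ∈ S}`, and therefore in `𝒞`. Thus `x ∈ ⋃𝒞`, and `⋃𝒞` belongs to `Γ^Z(P)`. A union that is
itself a member is the supremum.
-/

open Set

/-- A subset system on the category of posets. -/
structure SubsetSystem : Type 1 where
  Z : ∀ (P : Type) [PartialOrder P], Set (Set P)
  singleton_mem : ∀ (P : Type) [PartialOrder P] (x : P), {x} ∈ Z P
  image_mem : ∀ (P : Type) [PartialOrder P] (Q : Type) [PartialOrder Q]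
    (f : P → Q), Monotone f → ∀ S ∈ Z P, f '' S ∈ Z Q

/-- The cut operator `A^δ = A^{ul}`. -/
def cutOp {P : Type} [PartialOrder P] (A : Set P) : Set P :=
  lowerBounds (upperBounds A)

/-- The down-closure `↓A`. -/
def dSet {P : Type} [PartialOrder P] (A : Set P) : Set P := {p | ∃ a ∈ A, p ≤ a}

/-- The up-closure `↑A`. -/
def uSet {P : Type} [PartialOrder P] (A : Set P) : Set P := {p | ∃ a ∈ A, a ≤ p}

/-- The subbasic open sets `σ^Z(P)`. -/
def sigmaZ (Z : SubsetSystem) (P : Type) [PartialOrder P] : Set (Set P) :=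
  {U | ∀ S ∈ Z.Z P, (cutOp S ∩ U).Nonempty → (S ∩ U).Nonempty}

/-- The subbasic closed sets `Γ^Z(P)`. -/
def GammaZ (Z : SubsetSystem) (P : Type) [PartialOrder P] : Set (Set P) :=
  {A | ∀ S ∈ Z.Z P, S ⊆ A → cutOp S ⊆ A}

/-- The closure `cl_{σ^Z(P)}(M)`. -/
def clZ (Z : SubsetSystem) {P : Type} [PartialOrder P] (M : Set P) : Set P :=
  ⋂₀ {A | A ∈ GammaZ Z P ∧ M ⊆ A}

/-- `P` is weakly meet `s_Z`-continuous. -/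
def WMSZ (Z : SubsetSystem) (P : Type) [PartialOrder P] : Prop :=
  ∀ x : P, ∀ D ∈ Z.Z P, x ∈ cutOp D → x ∈ clZ Z (Set.Iic x ∩ dSet D)

/-- `A ≪_Z B`. -/
def wayBelowZ (Z : SubsetSystem) {P : Type} [PartialOrder P] (A B : Set P) : Prop :=
  ∀ S ∈ Z.Z P, (cutOp S ∩ uSet B).Nonempty → (S ∩ uSet A).Nonempty

/-- `↟_Z x = {y : y ≪_Z x}`. -/
def ddArrow (Z : SubsetSystem) {P : Type} [PartialOrder P] (x : P) : Set P :=
  {y | wayBelowZ Z {y} {x}}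

/-- `P` is weak `s_Z`-continuous. -/
def WeakSZCont (Z : SubsetSystem) (P : Type) [PartialOrder P] : Prop :=
  ∀ x : P, x ∈ cutOp (ddArrow Z x)

/-- `P` is `s_Z`-continuous. -/
def SZCont (Z : SubsetSystem) (P : Type) [PartialOrder P] : Prop :=
  WeakSZCont Z P ∧ ∀ x : P, ∃ S ∈ Z.Z P, ddArrow Z x = dSet S

/-- `f` is `σ^Z`-continuous. -/
def SigmaZCont (Z : SubsetSystem) {P Q : Type} [PartialOrder P] [PartialOrder Q]
    (f : P → Q) : Prop :=
  ∀ A ∈ GammaZ Z Q, f ⁻¹' A ∈ GammaZ Z P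

/-- The interior w.r.t. the subbasic opens `σ^Z(P)`. -/
def intZ (Z : SubsetSystem) {P : Type} [PartialOrder P] (A : Set P) : Set P :=
  ⋃₀ {U | U ∈ sigmaZ Z P ∧ U ⊆ A}

/-- `Fin P = {↑F : F ⊆_f P}` ordered by reverse inclusion. -/
def FinP (P : Type) [PartialOrder P] : Type :=
  {A : Set P // ∃ F : Set P, F.Finite ∧ A = uSet F}

instance (P : Type) [PartialOrder P] : PartialOrder (FinP P) :=
  PartialOrder.lift (fun A => OrderDual.toDual A.1)
    (fun A B h => Subtype.ext (OrderDual.toDual.injective h))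

/-- The set of minimal elements of `A`. -/
def minSet {P : Type} [PartialOrder P] (A : Set P) : Set P :=
  {x ∈ A | ∀ y ∈ A, y ≤ x → y = x}

/-- `ω_Z(x) = {F finite : F ≪_Z x}`. -/
def omegaZ (Z : SubsetSystem) {P : Type} [PartialOrder P] (x : P) : Set (Set P) :=
  {F | F.Finite ∧ wayBelowZ Z F {x}}

/-- `P` is `s_Z`-quasicontinuous. -/
def SZQuasi (Z : SubsetSystem) (P : Type) [PartialOrder P] : Prop :=
  ∀ p : P,
    {A : FinP P | ∃ F ∈ omegaZ Z p, A.1 = uSet F} ∈ Z.Z (FinP P) ∧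
    Set.Ici p = ⋂ F ∈ omegaZ Z p, uSet F

/-- `Z` has the Rudin property. -/
def RudinProp (Z : SubsetSystem) : Prop :=
  ∀ (P : Type) [PartialOrder P], ∀ E : Set P, IsUpperSet E →
    ∀ G ∈ Z.Z (FinP P), (∀ A ∈ G, A.1 ≠ (∅ : Set P)) →
    (⋂ A ∈ G, A.1) ⊆ E →
    ∃ K : Set P,
      K ⊆ (⋃ A ∈ G, minSet A.1) ∧
      (∀ A ∈ G, (K ∩ minSet A.1).Nonempty) ∧
      K ∈ Z.Z P ∧
      (⋂ k ∈ K, Set.Ici k) ⊆ E ∧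
      ∀ A ∈ G, ∀ B ∈ G, A.1 ⊆ B.1 →
        K ∩ minSet A.1 ⊆ uSet (K ∩ minSet B.1)

/-- `Z` is union complete. -/
def UnionComplete (Z : SubsetSystem) : Prop :=
  ∀ (P : Type) [PartialOrder P], ∀ S ∈ Z.Z ↥(Z.Z P), (⋃ D ∈ S, D.1) ∈ Z.Z P

/-- `Z` has the finite family union property. -/
def FFUP (Z : SubsetSystem) : Prop :=
  ∀ (P : Type) [PartialOrder P], ∀ (n : ℕ) (S : Fin n → Set (FinP P)),
    (∀ i, S i ∈ Z.Z (FinP P)) →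
    {A : FinP P | ∃ g : Fin n → FinP P, (∀ i, g i ∈ S i) ∧ A.1 = ⋃ i, (g i).1} ∈
      Z.Z (FinP P)

/-- `Z` has property M. -/
def PropM (Z : SubsetSystem) : Prop :=
  ∀ (P : Type) [PartialOrder P], ∀ A : FinP P, {B : FinP P | A.1 ⊆ B.1} ∈ Z.Z (FinP P)

/-- The lower topology `ω(P)`, generated by the complements of principal filters. -/
def lowerTop (P : Type) [PartialOrder P] : TopologicalSpace P :=
  TopologicalSpace.generateFrom {s | ∃ a : P, s = (Set.Ici a)ᶜ}

/-- The relative cut `E^δ|_A`. -/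
def cutIn {P : Type} [PartialOrder P] (E A : Set P) : Set P :=
  {p ∈ A | ∀ m ∈ upperBounds E ∩ A, p ≤ m}

/-- `Z` is subset hereditary. -/
def SubsetHered (Z : SubsetSystem) : Prop :=
  ∀ (P : Type) [PartialOrder P] (Q : Type) [PartialOrder Q] (f : P → Q),
    (∀ x y : P, f x ≤ f y ↔ x ≤ y) → ∀ D : Set P, (D ∈ Z.Z P ↔ f '' D ∈ Z.Z Q)

/-- The `Z`-Scott topology on `P` is lower hereditary. -/
def LowerHered (Z : SubsetSystem) (P : Type) [PartialOrder P] : Prop :=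
  ∀ A ∈ GammaZ Z P,
    GammaZ Z ↥A = {C : Set ↥A | ∃ B ∈ GammaZ Z P, C = Subtype.val ⁻¹' B}

/-- `x ≺_Z y` (the `Z`-beneath relation). -/
def beneathZ (Z : SubsetSystem) {P : Type} [PartialOrder P] (x y : P) : Prop :=
  ∀ A ∈ GammaZ Z P, y ∈ cutOp A → x ∈ A

/-- `P` is `δ_Z`-continuous. -/
def DeltaZCont (Z : SubsetSystem) (P : Type) [PartialOrder P] : Prop :=
  ∀ a : P, a ∈ cutOp {m | beneathZ Z m a}

/-- `k_Z(L)`: the set of `Z`-compact elements. -/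
def kZ (Z : SubsetSystem) (L : Type) [PartialOrder L] : Set L :=
  {x | beneathZ Z x x}

/-- Singletons are `Z`-sets and `{a}^δ = ↓a`, so members of `Γ^Z(P)` are lower sets. -/
theorem isLowerSet_of_mem_GammaZ (Z : SubsetSystem) {P : Type} [PartialOrder P] {A : Set P}
    (hA : A ∈ GammaZ Z P) : IsLowerSet A := by
  intro a b hba ha
  exact hA {a} (Z.singleton_mem P a) (Set.singleton_subset_iff.2 ha)
    fun u hu => hba.trans (hu rfl)

theorem Iic_mem_GammaZ (Z : SubsetSystem) {P : Type} [PartialOrder P] (p : P) :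
    Set.Iic p ∈ GammaZ Z P :=
  fun _ _ hS _ hx => hx fun _ hs => hS hs

/-- for `𝒞 ∈ Γ^Z(Γ^Z(P))`, the union `⋃𝒞` belongs to `Γ^Z(P)` and is
the supremum of `𝒞` in `Γ^Z(P)`. -/
theorem stmt14 (Z : SubsetSystem) (P : Type) [PartialOrder P]
    (𝒞 : Set ↥(GammaZ Z P)) (h𝒞 : 𝒞 ∈ GammaZ Z ↥(GammaZ Z P)) :
    ∃ hu : (⋃ C ∈ 𝒞, C.1) ∈ GammaZ Z P,
      IsLUB 𝒞 (⟨⋃ C ∈ 𝒞, C.1, hu⟩ : ↥(GammaZ Z P)) := by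
  have hlow := isLowerSet_of_mem_GammaZ Z h𝒞
  have hu : (⋃ C ∈ 𝒞, C.1) ∈ GammaZ Z P := by
    intro S hS hSC x hx
    let f : P → ↥(GammaZ Z P) := fun p => ⟨Set.Iic p, Iic_mem_GammaZ Z p⟩
    have hf : Monotone f := fun _ _ hab => Set.Iic_subset_Iic.2 hab
    have hfS : f '' S ⊆ 𝒞 := by
      rintro _ ⟨s, hs, rfl⟩
      obtain ⟨C, hC, hsC⟩ := Set.mem_iUnion₂.1 (hSC hs)
      have hle : f s ≤ C := fun y hy => isLowerSet_of_mem_GammaZ Z C.2 hy hsC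
      exact hlow hle hC
    have hfx : f x ∈ cutOp (f '' S) := by
      intro B hB
      have hSB : S ⊆ B.1 := fun s hs => hB ⟨s, hs, rfl⟩ (le_refl s)
      exact fun y hy => isLowerSet_of_mem_GammaZ Z B.2 hy (B.2 S hS hSB hx)
    exact Set.mem_iUnion₂.2
      ⟨f x, h𝒞 _ (Z.image_mem P _ f hf S hS) hfS hfx, le_refl x⟩
  refine ⟨hu, ?_, ?_⟩
  · intro C hC y hy
    exact Set.mem_iUnion₂.2 ⟨C, hC, hy⟩
  · intro B hB y hy
    obtain ⟨C, hC, hyC⟩ := Set.mem_iUnion₂.1 hy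
    exact hB hC hyC
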